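/- arXiv:1806.05206 — 2 statements merged into one kernel-verified Lean document; each statement's English description precedes it below -/
import Mathlib

section
/- Under the stated gap assumptions, the symmetric operator A satisfies Krein's gap condition: for every x ∈ D(A), ‖Ax − ((λ₀+λ₁)/2)·x‖ ≥ ((λ₁−λ₀)/2)·‖x‖. -/
local notation "⟪" x ", " y "⟫" => @inner ℂ _ _ x y

/-- If a vector `v` nearly makes the quadratic form `λ₁ ‖z + v‖² ≤ ⟨z, a⟩ + 2 ⟨a, v⟩ + λ₀ ‖v‖²` hold,
then completing the square in `v` bounds `‖λ₁ z - a‖` from below, up to an error in `ε`. -/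
theorem le_norm_smul_sub_sq_of_form_le {E : Type*} [NormedAddCommGroup E] [InnerProductSpace ℝ E]
    {z a v : E} {l₀ l₁ ε : ℝ} (hε : 0 < ε) (hεl : 2 * ε < l₁ - l₀)
    (h : (l₁ - ε) * ‖z + v‖ ^ 2 ≤ inner ℝ z a + 2 * inner ℝ a v + l₀ * ‖v‖ ^ 2) :
    (l₁ - l₀ - 2 * ε) * (l₁ * ‖z‖ ^ 2 - inner ℝ z a - 2 * ε * ‖z‖ ^ 2) ≤ ‖l₁ • z - a‖ ^ 2 := by
  have hsq : 0 ≤ ‖(l₁ • z - a) + (l₁ - l₀ - 2 * ε) • v‖ ^ 2 := sq_nonneg _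
  have hzv : 0 ≤ ‖z - v‖ ^ 2 := sq_nonneg _
  rw [norm_add_sq_real, inner_smul_right, inner_sub_left, real_inner_smul_left, norm_smul,
    mul_pow, Real.norm_eq_abs, sq_abs] at hsq
  rw [norm_sub_sq_real] at hzv
  rw [norm_add_sq_real] at h
  have hc : 0 < l₁ - l₀ - 2 * ε := by linarith
  have hlin : l₁ * ‖z‖ ^ 2 - inner ℝ z a - 2 * ε * ‖z‖ ^ 2 ≤
      -(2 * (l₁ * inner ℝ z v - inner ℝ a v) + (l₁ - l₀ - 2 * ε) * ‖v‖ ^ 2) := by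
    nlinarith
  nlinarith [mul_le_mul_of_nonneg_left hlin hc.le]

open Filter Topology in
/-- If for every small `ε > 0` some `v` satisfies the form inequality with `λ₁ - ε`, then `a` stays at
distance at least `(λ₁ - λ₀) / 2 * ‖z‖` from `((λ₀ + λ₁) / 2) z`. -/
theorem gap_le_norm_sub_smul_of_forall_exists {E : Type*} [NormedAddCommGroup E]
    [InnerProductSpace ℝ E] {z a : E} {l₀ l₁ : ℝ} (hl : l₀ < l₁)
    (h : ∀ ε > 0, ∃ v : E,
      (l₁ - ε) * ‖z + v‖ ^ 2 ≤ inner ℝ z a + 2 * inner ℝ a v + l₀ * ‖v‖ ^ 2) :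
    (l₁ - l₀) / 2 * ‖z‖ ≤ ‖a - ((l₀ + l₁) / 2) • z‖ := by
  have hlim : Tendsto
      (fun ε : ℝ ↦ (l₁ - l₀ - 2 * ε) * (l₁ * ‖z‖ ^ 2 - inner ℝ z a - 2 * ε * ‖z‖ ^ 2))
      (𝓝[>] 0)
      (𝓝 ((l₁ - l₀ - 2 * 0) * (l₁ * ‖z‖ ^ 2 - inner ℝ z a - 2 * 0 * ‖z‖ ^ 2))) :=
    (Continuous.tendsto (by fun_prop) 0).mono_left nhdsWithin_le_nhds
  have hbound := le_of_tendsto hlim (b := ‖l₁ • z - a‖ ^ 2) <| by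
    filter_upwards [Ioo_mem_nhdsGT (show (0 : ℝ) < (l₁ - l₀) / 2 by linarith)] with ε hε
    obtain ⟨v, hv⟩ := h ε hε.1
    exact le_norm_smul_sub_sq_of_form_le hε.1 (by linarith [hε.2]) hv
  refine (pow_le_pow_iff_left₀ (by nlinarith [norm_nonneg z]) (norm_nonneg _) two_ne_zero).1 ?_
  rw [norm_sub_sq_real, real_inner_smul_left, norm_smul, mul_pow, Real.norm_eq_abs,
    sq_abs] at hbound
  rw [norm_sub_sq_real, inner_smul_right, real_inner_comm, norm_smul, mul_pow (‖_‖),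
    Real.norm_eq_abs, sq_abs]
  nlinarith

/-- **Krein's gap condition** for a densely defined symmetric operator `A` on a complex
Hilbert space `H`, given an orthogonal decomposition `H = H₊ ⊕ H₋` (via an orthogonal
projection `P = Λ₊`, with `Λ₋ = 1 - P`) leaving the domain invariant, and the gap
assumptions on `λ₀` (upper bound for the form on `F₋ = Λ₋ D(A)`) and `λ₁`
(the inf-sup value over `F₊ = Λ₊ D(A)`): for every `x ∈ D(A)`,
`‖Ax − ((λ₀+λ₁)/2)·x‖ ≥ ((λ₁−λ₀)/2)·‖x‖`. -/
theorem krein_gap_condition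
    {H : Type*} [NormedAddCommGroup H] [InnerProductSpace ℂ H] [CompleteSpace H]
    (A : H →ₗ.[ℂ] H)
    (hdense : Dense (A.domain : Set H))
    (hsymm : ∀ x y : A.domain, ⟪A x, (y : H)⟫ = ⟪(x : H), A y⟫)
    (P : H →L[ℂ] H)
    (hPsa : ∀ u v : H, ⟪P u, v⟫ = ⟪u, P v⟫)
    (hPidem : ∀ u : H, P (P u) = P u)
    (hPinv : ∀ x ∈ A.domain, P x ∈ A.domain)
    (lam0 lam1 : ℝ) (hgap : lam0 < lam1)
    (hlam0 : ∀ y : A.domain, P (y : H) = 0 →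
      (⟪(y : H), A y⟫).re ≤ lam0 * ‖(y : H)‖ ^ 2)
    (hlam1 : ∀ x : A.domain, P (x : H) = (x : H) → (x : H) ≠ 0 → ∀ ε > 0,
      ∃ y : A.domain, P (y : H) = 0 ∧
        (lam1 - ε) * ‖(x : H) + (y : H)‖ ^ 2 ≤ (⟪(x : H) + (y : H), A (x + y)⟫).re) :
    ∀ x : A.domain,
      (lam1 - lam0) / 2 * ‖(x : H)‖ ≤
        ‖A x - (((lam0 + lam1) / 2 : ℝ) : ℂ) • (x : H)‖ := by
  intro x
  let _ : InnerProductSpace ℝ H := InnerProductSpace.rclikeToReal ℂ H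
  have hform : ∀ v : A.domain, P (v : H) = 0 →
      (⟪(x : H) + (v : H), A (x + v)⟫).re ≤
        inner ℝ (x : H) (A x) + 2 * inner ℝ (A x) (v : H) + lam0 * ‖(v : H)‖ ^ 2 := by
    intro v hv
    have hvx : (⟪(v : H), A x⟫).re = (⟪A x, (v : H)⟫).re := inner_re_symm (𝕜 := ℂ) _ _
    have hz : inner ℝ (x : H) (A x) = (⟪(x : H), A x⟫).re := rfl
    have hw : inner ℝ (A x) (v : H) = (⟪A x, (v : H)⟫).re := rfl
    rw [A.map_add, inner_add_left, inner_add_right, inner_add_right, ← hsymm x v, hz, hw]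
    simp only [Complex.add_re, hvx]
    linarith [hlam0 v hv]
  rw [Complex.coe_smul]
  refine gap_le_norm_sub_smul_of_forall_exists hgap fun ε hε ↦ ?_
  by_cases hPx : P (x : H) = 0
  · refine ⟨((-x : A.domain) : H), le_trans ?_ (hform (-x) (by simp [hPx]))⟩
    simp
  · obtain ⟨y, hy, hle⟩ := hlam1 ⟨P x, hPinv x x.2⟩ (hPidem x) hPx ε hε
    set p : A.domain := ⟨P x, hPinv x x.2⟩
    have hxv : x + (p + y - x) = p + y := by abel
    have hxv' : (x : H) + ((p + y - x : A.domain) : H) = (p : H) + (y : H) :=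
      congrArg Subtype.val hxv
    have hv : P ((p + y - x : A.domain) : H) = 0 := by
      simp [p, hPidem, hy]
    refine ⟨((p + y - x : A.domain) : H), le_trans ?_ (hform (p + y - x) hv)⟩
    rw [hxv', hxv]
    exact hle
end

section
/- Let u : ℝ → ℂ be continuously differentiable with compact support contained in (−∞,0), u not identically zero, and let ℓ ∈ ℝ. Then the supremum over all continuously differentiable v : ℝ → ℂ with compact support contained in (−∞,0) of 2·Re⟨u, v′ − ℓv⟩_{L²} / (‖u‖_{L²}² + ‖v‖_{L²}²) equals ‖u′ + ℓu‖_{L²}/‖u‖_{L²} = √(‖u′‖_{L²}² + ℓ²‖u‖_{L²}²)/‖u‖_{L²}. -/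
open MeasureTheory

section HalfLine

open Filter Topology ComplexConjugate

theorem setIntegral_Iio_eq_integral_of_tsupport_subset {f : ℝ → ℂ} {E : Type*}
    [NormedAddCommGroup E] [NormedSpace ℝ E] {F : ℝ → E} {a : ℝ}
    (hf : tsupport f ⊆ Set.Iio a) (hF : ∀ x, x ∉ tsupport f → F x = 0) :
    ∫ x in Set.Iio a, F x = ∫ x, F x :=
  setIntegral_eq_integral_of_forall_compl_eq_zero fun x hx => hF x fun h => hx (hf h)

theorem integrable_conj_mul_of_hasCompactSupport {f g : ℝ → ℂ} (hf : Continuous f)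
    (hg : Continuous g) (hgs : HasCompactSupport g) :
    Integrable fun x => conj (f x) * g x :=
  Continuous.integrable_of_hasCompactSupport (by fun_prop) hgs.mul_left

theorem hasCompactSupport_norm_sq {f : ℝ → ℂ} (hfs : HasCompactSupport f) :
    HasCompactSupport fun x => ‖f x‖ ^ 2 :=
  hfs.comp_left (g := fun z : ℂ => ‖z‖ ^ 2) (by simp)

theorem integrable_norm_sq_of_hasCompactSupport {f : ℝ → ℂ} (hf : Continuous f)
    (hfs : HasCompactSupport f) : Integrable fun x => ‖f x‖ ^ 2 :=
  Continuous.integrable_of_hasCompactSupport (by fun_prop) (hasCompactSupport_norm_sq hfs)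

theorem integral_norm_sq_pos_of_hasCompactSupport {f : ℝ → ℂ} (hf : Continuous f)
    (hfs : HasCompactSupport f) (h0 : f ≠ 0) : 0 < ∫ x, ‖f x‖ ^ 2 := by
  obtain ⟨x, hx⟩ := Function.ne_iff.mp h0
  exact Continuous.integral_pos_of_hasCompactSupport_nonneg_nonzero (x := x) (by fun_prop)
    (hasCompactSupport_norm_sq hfs) (fun y => by positivity)
    (pow_ne_zero 2 (norm_ne_zero_iff.mpr hx))

theorem integral_conj_mul_deriv {f g : ℝ → ℂ} (hf : ContDiff ℝ 1 f)
    (hg : ContDiff ℝ 1 g) (hgs : HasCompactSupport g) :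
    ∫ x, conj (f x) * deriv g x = -∫ x, conj (deriv f x) * g x := by
  have hf' := hf.continuous_deriv le_rfl
  have hg' := hg.continuous_deriv le_rfl
  refine integral_mul_deriv_eq_deriv_mul_of_integrable (u := fun x => conj (f x))
    (u' := fun x => conj (deriv f x)) (fun x _ => ?_) (fun x _ => ?_)
    (integrable_conj_mul_of_hasCompactSupport hf.continuous hg' hgs.deriv)
    (integrable_conj_mul_of_hasCompactSupport hf' hg.continuous hgs)
    (integrable_conj_mul_of_hasCompactSupport hf.continuous hg.continuous hgs)
  · exact ((hf.differentiable one_ne_zero) x).hasDerivAt.star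
  · exact ((hg.differentiable one_ne_zero) x).hasDerivAt

theorem integral_conj_mul_deriv_sub {f g : ℝ → ℂ} (hf : ContDiff ℝ 1 f)
    (hg : ContDiff ℝ 1 g) (hgs : HasCompactSupport g) (l : ℝ) :
    ∫ x, conj (f x) * (deriv g x - (l : ℂ) * g x) =
      -∫ x, conj (deriv f x + (l : ℂ) * f x) * g x := by
  have hf' := hf.continuous_deriv le_rfl
  have hg' := hg.continuous_deriv le_rfl
  have h1 := integrable_conj_mul_of_hasCompactSupport hf.continuous hg' hgs.deriv
  have h2 := integrable_conj_mul_of_hasCompactSupport hf' hg.continuous hgs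
  have h3 := (integrable_conj_mul_of_hasCompactSupport hf.continuous hg.continuous hgs).const_mul
    (l : ℂ)
  have e1 : (fun x => conj (f x) * (deriv g x - (l : ℂ) * g x)) =
      fun x => conj (f x) * deriv g x - (l : ℂ) * (conj (f x) * g x) := by
    funext x; ring
  have e2 : (fun x => conj (deriv f x + (l : ℂ) * f x) * g x) =
      fun x => conj (deriv f x) * g x + (l : ℂ) * (conj (f x) * g x) := by
    funext x; simp only [map_add, map_mul, Complex.conj_ofReal]; ring
  rw [e1, e2, integral_sub h1 h3, integral_add h2 h3, integral_conj_mul_deriv hf hg hgs]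
  ring

theorem re_integral_conj_deriv_mul_self {f : ℝ → ℂ} (hf : ContDiff ℝ 1 f)
    (hfs : HasCompactSupport f) : (∫ x, conj (deriv f x) * f x).re = 0 := by
  have h := integral_conj_mul_deriv hf hf hfs
  have hc : ∫ x, conj (f x) * deriv f x = conj (∫ x, conj (deriv f x) * f x) := by
    rw [← integral_conj]
    congr 1
    funext x
    simp [mul_comm]
  rw [hc] at h
  have := congrArg Complex.re h
  simp only [Complex.conj_re, Complex.neg_re] at this
  linarith

theorem integral_norm_sq_deriv_add {f : ℝ → ℂ} (hf : ContDiff ℝ 1 f)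
    (hfs : HasCompactSupport f) (l : ℝ) :
    ∫ x, ‖deriv f x + (l : ℂ) * f x‖ ^ 2 =
      (∫ x, ‖deriv f x‖ ^ 2) + l ^ 2 * ∫ x, ‖f x‖ ^ 2 := by
  have hf' := hf.continuous_deriv le_rfl
  have h1 := integrable_norm_sq_of_hasCompactSupport hf' hfs.deriv
  have h2 := (integrable_norm_sq_of_hasCompactSupport hf.continuous hfs).const_mul (l ^ 2)
  have h3 := integrable_conj_mul_of_hasCompactSupport hf' hf.continuous hfs
  have e : (fun x => ‖deriv f x + (l : ℂ) * f x‖ ^ 2) = fun x =>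
      (‖deriv f x‖ ^ 2 + l ^ 2 * ‖f x‖ ^ 2) + 2 * l * (conj (deriv f x) * f x).re := by
    funext x
    simp only [← Complex.normSq_eq_norm_sq, Complex.normSq_apply, Complex.add_re, Complex.add_im,
      Complex.mul_re, Complex.mul_im, Complex.conj_re, Complex.conj_im, Complex.ofReal_re,
      Complex.ofReal_im]
    ring
  have h4 : Integrable fun x => 2 * l * (conj (deriv f x) * f x).re := h3.re.const_mul (2 * l)
  have hre : ∫ x, (conj (deriv f x) * f x).re = 0 :=
    (integral_re h3).trans (re_integral_conj_deriv_mul_self hf hfs)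
  rw [e, integral_add (by exact h1.add h2) h4, integral_add h1 h2,
    integral_const_mul, integral_const_mul, hre]
  ring

theorem neg_two_mul_re_integral_conj_mul_le {f g : ℝ → ℂ} (hf : Continuous f)
    (hfs : HasCompactSupport f) (hg : Continuous g) (hgs : HasCompactSupport g) {s : ℝ}
    (hs : 0 < s) :
    -(2 * (∫ x, conj (f x) * g x).re) ≤ (∫ x, ‖f x‖ ^ 2) / s + s * ∫ x, ‖g x‖ ^ 2 := by
  have h1 := integrable_norm_sq_of_hasCompactSupport hf hfs
  have h2 := integrable_norm_sq_of_hasCompactSupport hg hgs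
  have h3 := integrable_conj_mul_of_hasCompactSupport hf hg hgs
  have hre : ∫ x, (conj (f x) * g x).re = (∫ x, conj (f x) * g x).re := integral_re h3
  rw [← hre, ← integral_const_mul, ← integral_neg, ← integral_div, ← integral_const_mul,
    ← integral_add (h1.div_const s) (h2.const_mul s)]
  refine integral_mono (h3.re.const_mul 2).neg ((h1.div_const s).add (h2.const_mul s)) fun x => ?_
  have key : (‖f x‖ ^ 2 / s + s * ‖g x‖ ^ 2) - -(2 * (conj (f x) * g x).re) =
      ‖f x + (s : ℂ) * g x‖ ^ 2 / s := by
    simp only [← Complex.normSq_eq_norm_sq, Complex.normSq_apply, Complex.add_re, Complex.add_im,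
      Complex.mul_re, Complex.mul_im, Complex.conj_re, Complex.conj_im, Complex.ofReal_re,
      Complex.ofReal_im]
    field_simp
    ring
  have : 0 ≤ ‖f x + (s : ℂ) * g x‖ ^ 2 / s := by positivity
  show -(2 * (conj (f x) * g x).re) ≤ ‖f x‖ ^ 2 / s + s * ‖g x‖ ^ 2
  linarith

/-- Forward difference quotients approximate `f' + l f` boundedly and pointwise by functions of
class `C¹` whose supports stay in a fixed compact set and in any left half-line containing the
support of `f`. -/
theorem exists_contDiff_tendsto_deriv_add {f : ℝ → ℂ} (hf : ContDiff ℝ 1 f)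
    (hfs : HasCompactSupport f) {a : ℝ} (hfa : tsupport f ⊆ Set.Iio a) (l : ℝ) :
    ∃ z : ℕ → ℝ → ℂ, (∀ n, ContDiff ℝ 1 (z n)) ∧ (∀ n, HasCompactSupport (z n)) ∧
      (∀ n, tsupport (z n) ⊆ Set.Iio a) ∧
      (∀ x, Tendsto (fun n => z n x) atTop (𝓝 (deriv f x + (l : ℂ) * f x))) ∧
      ∃ (K : Set ℝ) (C : ℝ), IsCompact K ∧ ∀ n x, ‖z n x‖ ≤ K.indicator (fun _ => C) x := by
  obtain ⟨L, hL⟩ := ContDiff.lipschitzWith_of_hasCompactSupport hfs hf one_ne_zero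
  obtain ⟨M, hM⟩ := hfs.exists_bound_of_continuous hf.continuous
  obtain ⟨b, hb⟩ := hfs.isCompact.bddBelow
  let h : ℕ → ℝ := fun n => 1 / ((n : ℝ) + 1)
  have hpos : ∀ n, 0 < h n := fun n => Nat.one_div_pos_of_nat
  have hle : ∀ n, h n ≤ 1 := fun n => by
    have := Nat.one_div_le_one_div (α := ℝ) (Nat.zero_le n)
    simpa [h] using this
  let z : ℕ → ℝ → ℂ := fun n x => (h n)⁻¹ • (f (x + h n) - f x) + (l : ℂ) * f x
  have hsupp : ∀ n, tsupport (z n) ⊆ tsupport f ∪ (fun x => x + h n) ⁻¹' tsupport f := by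
    intro n
    refine closure_minimal (fun x hx => ?_) ((isClosed_tsupport f).union
      ((isClosed_tsupport f).preimage (by fun_prop)))
    by_contra hcon
    simp only [Set.mem_union, Set.mem_preimage, not_or] at hcon
    exact hx (by simp [z, image_eq_zero_of_notMem_tsupport hcon.1,
      image_eq_zero_of_notMem_tsupport hcon.2])
  have hIcc : ∀ n, tsupport (z n) ⊆ Set.Icc (b - 1) a := by
    intro n x hx
    have h1 := hpos n
    have h2 := hle n
    rcases hsupp n hx with hx | hx
    · have h3 := hb hx
      have h4 : x < a := hfa hx
      exact ⟨by linarith, h4.le⟩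
    · have h3 := hb hx
      have h4 : x + h n < a := hfa hx
      exact ⟨by linarith, by linarith⟩
  refine ⟨z, fun n => ?_, fun n => isCompact_Icc.of_isClosed_subset (isClosed_tsupport _) (hIcc n),
    fun n x hx => ?_, fun x => ?_, Set.Icc (b - 1) a, L + |l| * M, isCompact_Icc, fun n x => ?_⟩
  · have : ContDiff ℝ 1 fun x => f (x + h n) := hf.comp (contDiff_id.add contDiff_const)
    exact ((this.sub hf).const_smul _).add (contDiff_const.mul hf)
  · rcases hsupp n hx with hx | hx
    · exact hfa hx
    · have h4 : x + h n < a := hfa hx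
      exact lt_trans (lt_add_of_pos_right x (hpos n)) h4
  · have ht : Tendsto h atTop (𝓝[>] 0) :=
      tendsto_nhdsWithin_iff.mpr ⟨tendsto_one_div_add_atTop_nhds_zero_nat,
        Eventually.of_forall hpos⟩
    exact (((hf.differentiable one_ne_zero) x).hasDerivAt.tendsto_slope_zero_right.comp ht).add
      tendsto_const_nhds
  · by_cases hx : x ∈ Set.Icc (b - 1) a
    · rw [Set.indicator_of_mem hx]
      refine (norm_add_le _ _).trans (add_le_add ?_ ?_)
      · have h1 := hL.norm_sub_le (x + h n) x
        rw [add_sub_cancel_left, Real.norm_of_nonneg (hpos n).le] at h1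
        rw [norm_smul, Real.norm_of_nonneg (inv_pos.mpr (hpos n)).le, inv_mul_le_iff₀ (hpos n),
          mul_comm]
        exact h1
      · rw [norm_mul, Complex.norm_real, Real.norm_eq_abs]
        exact mul_le_mul_of_nonneg_left (hM x) (abs_nonneg l)
    · rw [Set.indicator_of_notMem hx,
        image_eq_zero_of_notMem_tsupport fun hx' => hx (hIcc n hx'), norm_zero]

theorem tendsto_integral_norm_sq {z : ℕ → ℝ → ℂ} {w : ℝ → ℂ} (hz : ∀ n, Continuous (z n))
    (hlim : ∀ x, Tendsto (fun n => z n x) atTop (𝓝 (w x))) {K : Set ℝ} {C : ℝ}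
    (hK : IsCompact K) (hb : ∀ n x, ‖z n x‖ ≤ K.indicator (fun _ => C) x) :
    Tendsto (fun n => ∫ x, ‖z n x‖ ^ 2) atTop (𝓝 (∫ x, ‖w x‖ ^ 2)) := by
  refine tendsto_integral_of_dominated_convergence (K.indicator fun _ => C ^ 2)
    (fun n => by have := hz n; exact Continuous.aestronglyMeasurable (by fun_prop))
    ((integrable_indicator_iff hK.measurableSet).mpr
      (integrableOn_const hK.measure_lt_top.ne))
    (fun n => Eventually.of_forall fun x => ?_)
    (Eventually.of_forall fun x => (hlim x).norm.pow 2)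
  have h := hb n x
  rw [Real.norm_of_nonneg (by positivity)]
  by_cases hx : x ∈ K
  · rw [Set.indicator_of_mem hx] at h ⊢
    gcongr
  · rw [Set.indicator_of_notMem hx] at h ⊢
    simp [norm_le_zero_iff.mp h]

theorem tendsto_integral_conj_mul {z : ℕ → ℝ → ℂ} {w : ℝ → ℂ} (hw : Continuous w)
    (hws : HasCompactSupport w) (hz : ∀ n, Continuous (z n))
    (hlim : ∀ x, Tendsto (fun n => z n x) atTop (𝓝 (w x))) {K : Set ℝ} {C : ℝ}
    (hb : ∀ n x, ‖z n x‖ ≤ K.indicator (fun _ => C) x) :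
    Tendsto (fun n => (∫ x, conj (w x) * z n x).re) atTop (𝓝 (∫ x, ‖w x‖ ^ 2)) := by
  have hint : Integrable fun x => ‖w x‖ * |C| :=
    (hw.integrable_of_hasCompactSupport hws).norm.mul_const _
  have h := tendsto_integral_of_dominated_convergence (fun x => ‖w x‖ * |C|)
    (F := fun n x => conj (w x) * z n x) (f := fun x => conj (w x) * w x)
    (fun n => by have := hz n; exact Continuous.aestronglyMeasurable (by fun_prop)) hint
    (fun n => Eventually.of_forall fun x => by
      rw [norm_mul, RCLike.norm_conj]
      refine mul_le_mul_of_nonneg_left ((hb n x).trans ?_) (norm_nonneg _)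
      by_cases hx : x ∈ K
      · rw [Set.indicator_of_mem hx]
        exact le_abs_self C
      · rw [Set.indicator_of_notMem hx]
        exact abs_nonneg C)
    (Eventually.of_forall fun x => tendsto_const_nhds.mul (hlim x))
  have e : ∫ x, conj (w x) * w x = ((∫ x, ‖w x‖ ^ 2 : ℝ) : ℂ) := by
    rw [← integral_complex_ofReal]
    congr 1
    funext x
    rw [Complex.conj_mul']
    push_cast
    rfl
  rw [e] at h
  exact (Complex.continuous_re.tendsto _).comp h

end HalfLine



/-- Let `u : ℝ → ℂ` be continuously differentiable with compact support contained in
`(−∞,0)`, `u` not identically zero, and `ℓ ∈ ℝ`. Then the supremum over all continuously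
differentiable `v : ℝ → ℂ` with compact support contained in `(−∞,0)` of
`2·Re⟨u, v′ − ℓv⟩_{L²} / (‖u‖² + ‖v‖²)` equals
`‖u′ + ℓu‖/‖u‖ = √(‖u′‖² + ℓ²‖u‖²)/‖u‖` (all norms in `L²((−∞,0))`). -/
theorem sup_single_mode
    (u : ℝ → ℂ) (hu1 : ContDiff ℝ 1 u) (hu2 : HasCompactSupport u)
    (hu3 : tsupport u ⊆ Set.Iio 0) (hu0 : u ≠ 0) (ℓ : ℝ) :
    IsLUB {r : ℝ | ∃ v : ℝ → ℂ, ContDiff ℝ 1 v ∧ HasCompactSupport v ∧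
        tsupport v ⊆ Set.Iio 0 ∧
        r = 2 * (∫ x in Set.Iio (0 : ℝ),
              (starRingEnd ℂ) (u x) * (deriv v x - (ℓ : ℂ) * v x)).re /
            ((∫ x in Set.Iio (0 : ℝ), ‖u x‖ ^ 2) + ∫ x in Set.Iio (0 : ℝ), ‖v x‖ ^ 2)}
      (Real.sqrt (∫ x in Set.Iio (0 : ℝ), ‖deriv u x + (ℓ : ℂ) * u x‖ ^ 2) /
        Real.sqrt (∫ x in Set.Iio (0 : ℝ), ‖u x‖ ^ 2)) ∧
    Real.sqrt (∫ x in Set.Iio (0 : ℝ), ‖deriv u x + (ℓ : ℂ) * u x‖ ^ 2) =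
      Real.sqrt ((∫ x in Set.Iio (0 : ℝ), ‖deriv u x‖ ^ 2) +
        ℓ ^ 2 * ∫ x in Set.Iio (0 : ℝ), ‖u x‖ ^ 2) := by
  have huc := hu1.continuous
  have hu' := hu1.continuous_deriv le_rfl
  have hu_zero : ∀ x, x ∉ tsupport u → u x = 0 := fun x => image_eq_zero_of_notMem_tsupport
  have hu'_zero : ∀ x, x ∉ tsupport u → deriv u x = 0 := fun x => deriv_of_notMem_tsupport
  set w : ℝ → ℂ := fun x => deriv u x + (ℓ : ℂ) * u x
  have hw : Continuous w := by fun_prop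
  have hws : HasCompactSupport w := hu2.deriv.add hu2.mul_left
  have eU : ∫ x in Set.Iio (0 : ℝ), ‖u x‖ ^ 2 = ∫ x, ‖u x‖ ^ 2 :=
    setIntegral_Iio_eq_integral_of_tsupport_subset hu3 fun x hx => by simp [hu_zero x hx]
  have eU' : ∫ x in Set.Iio (0 : ℝ), ‖deriv u x‖ ^ 2 = ∫ x, ‖deriv u x‖ ^ 2 :=
    setIntegral_Iio_eq_integral_of_tsupport_subset hu3 fun x hx => by simp [hu'_zero x hx]
  have eW : ∫ x in Set.Iio (0 : ℝ), ‖deriv u x + (ℓ : ℂ) * u x‖ ^ 2 = ∫ x, ‖w x‖ ^ 2 :=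
    setIntegral_Iio_eq_integral_of_tsupport_subset hu3 fun x hx => by
      simp [hu_zero x hx, hu'_zero x hx]
  have eV : ∀ v : ℝ → ℂ, tsupport v ⊆ Set.Iio 0 →
      ∫ x in Set.Iio (0 : ℝ), ‖v x‖ ^ 2 = ∫ x, ‖v x‖ ^ 2 := fun v hv =>
    setIntegral_Iio_eq_integral_of_tsupport_subset hv fun x hx => by
      simp [image_eq_zero_of_notMem_tsupport hx]
  have eP : ∀ v : ℝ → ℂ, ContDiff ℝ 1 v → HasCompactSupport v →
      ∫ x in Set.Iio (0 : ℝ), (starRingEnd ℂ) (u x) * (deriv v x - (ℓ : ℂ) * v x) =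
        -∫ x, (starRingEnd ℂ) (w x) * v x := fun v hv hvs =>
    (setIntegral_Iio_eq_integral_of_tsupport_subset hu3 fun x hx => by
      simp [hu_zero x hx]).trans (integral_conj_mul_deriv_sub hu1 hv hvs ℓ)
  have hU : 0 < ∫ x, ‖u x‖ ^ 2 := integral_norm_sq_pos_of_hasCompactSupport huc hu2 hu0
  rw [eW, eU, eU']
  refine ⟨⟨?_, fun c hc => ?_⟩, congrArg Real.sqrt (integral_norm_sq_deriv_add hu1 hu2 ℓ)⟩
  · rintro r ⟨v, hv, hvs, hv0, rfl⟩
    rw [eV v hv0, eP v hv hvs, Complex.neg_re, mul_neg]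
    have hV : 0 ≤ ∫ x, ‖v x‖ ^ 2 := integral_nonneg fun x => by positivity
    rw [div_le_iff₀ (by linarith)]
    by_cases hw0 : w = 0
    · simp [hw0]
    have hW := integral_norm_sq_pos_of_hasCompactSupport hw hws hw0
    refine (neg_two_mul_re_integral_conj_mul_le hw hws hv.continuous hvs
      (div_pos (Real.sqrt_pos.mpr hW) (Real.sqrt_pos.mpr hU))).trans_eq ?_
    have hsU := Real.sqrt_pos.mpr hU
    have hsW := Real.sqrt_pos.mpr hW
    have qU := Real.sq_sqrt hU.le
    have qW := Real.sq_sqrt hW.le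
    generalize √(∫ x, ‖u x‖ ^ 2) = p at *
    generalize √(∫ x, ‖w x‖ ^ 2) = q at *
    rw [← qU, ← qW]
    field_simp
  · by_cases hw0 : w = 0
    · refine hc ⟨0, contDiff_const, HasCompactSupport.zero, by simp, by simp [hw0]⟩
    have hW := integral_norm_sq_pos_of_hasCompactSupport hw hws hw0
    obtain ⟨z, hz, hzs, hz0, hlim, K, C, hK, hb⟩ :=
      exists_contDiff_tendsto_deriv_add hu1 hu2 hu3 ℓ
    have hzc : ∀ n, Continuous (z n) := fun n => (hz n).continuous
    have t1 := tendsto_integral_conj_mul hw hws hzc hlim hb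
    have t2 := tendsto_integral_norm_sq hzc hlim hK hb
    have hsU := Real.sqrt_pos.mpr hU
    have hsW := Real.sqrt_pos.mpr hW
    have qU := Real.sq_sqrt hU.le
    have qW := Real.sq_sqrt hW.le
    set p := √(∫ x, ‖u x‖ ^ 2)
    set q := √(∫ x, ‖w x‖ ^ 2)
    have t : Filter.Tendsto (fun n => 2 * (p / q * (∫ x, (starRingEnd ℂ) (w x) * z n x).re) /
        ((∫ x, ‖u x‖ ^ 2) + (p / q) ^ 2 * ∫ x, ‖z n x‖ ^ 2)) Filter.atTop
        (nhds (2 * (p / q * ∫ x, ‖w x‖ ^ 2) /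
          ((∫ x, ‖u x‖ ^ 2) + (p / q) ^ 2 * ∫ x, ‖w x‖ ^ 2))) :=
      ((t1.const_mul _).const_mul 2).div ((t2.const_mul _).const_add _) (by positivity)
    have hlimit : 2 * (p / q * ∫ x, ‖w x‖ ^ 2) /
        ((∫ x, ‖u x‖ ^ 2) + (p / q) ^ 2 * ∫ x, ‖w x‖ ^ 2) = q / p := by
      rw [← qU, ← qW]
      field_simp
      ring
    rw [hlimit] at t
    refine le_of_tendsto' t fun n => hc ?_
    have hv : ContDiff ℝ 1 fun x => ((-(p / q) : ℝ) : ℂ) * z n x := contDiff_const.mul (hz n)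
    have hvs : HasCompactSupport fun x => ((-(p / q) : ℝ) : ℂ) * z n x := (hzs n).mul_left
    have hv0 : tsupport (fun x => ((-(p / q) : ℝ) : ℂ) * z n x) ⊆ Set.Iio 0 :=
      (tsupport_mul_subset_right).trans (hz0 n)
    refine ⟨_, hv, hvs, hv0, ?_⟩
    rw [eV _ hv0, eP _ hv hvs]
    have e1 : ∫ x, (starRingEnd ℂ) (w x) * (((-(p / q) : ℝ) : ℂ) * z n x) =
        ((-(p / q) : ℝ) : ℂ) * ∫ x, (starRingEnd ℂ) (w x) * z n x := by
      rw [← integral_const_mul]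
      congr 1
      funext x
      ring
    have e2 : ∫ x, ‖((-(p / q) : ℝ) : ℂ) * z n x‖ ^ 2 = (p / q) ^ 2 * ∫ x, ‖z n x‖ ^ 2 := by
      rw [← integral_const_mul]
      congr 1
      funext x
      rw [norm_mul, Complex.norm_real, mul_pow, Real.norm_eq_abs, sq_abs, neg_sq]
    rw [e1, e2, Complex.neg_re, Complex.re_ofReal_mul]
    ring
end
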